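/- Let X* = P_{k₂} C Q_{k₁}ᵀ for some C ∈ ℝ^{k₂×k₁}, let E ∈ ℝ^{p×n}, and set X = X* + E. Let φ : ℝ^{p×n} → ℝ be nonnegative, convex, and even. Let γ > 0, assume λ_{k₁+1} > 0 and ω_{k₂+1} > 0, and set γ₁ = γ/λ_{k₁+1} and γ₂ = γ/ω_{k₂+1}. If U* ∈ ℝ^{p×n} is a global minimizer of U ↦ φ(U − X) + γ₁·tr(U L₁ Uᵀ) + γ₂·tr(Uᵀ L₂ U), then ‖U* Q̄_{k₁}‖_F² + ‖P̄_{k₂}ᵀ U*‖_F² ≤ (1/γ)·φ(E) + ‖X*‖_F²·(λ_{k₁}/λ_{k₁+1} + ω_{k₂}/ω_{k₂+1}). -/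

import Mathlib

open Matrix BigOperators

/-- Squared Frobenius norm of a real matrix. -/
noncomputable def frobSq {m n : ℕ} (A : Matrix (Fin m) (Fin n) ℝ) : ℝ :=
  ∑ i, ∑ j, (A i j) ^ 2

/-!
Compare the minimizer with the competitor `X*`, whose loss is `φ (-E)`, and write `⪯` for the
Loewner order. Each Laplacian `L` enters only through two inequalities: `b W Wᴴ ⪯ L` for the high
eigenvectors `W` and `Vᴴ L V ⪯ a Vᴴ V` for the low eigenvectors `V`. Since
`tr (U W Wᴴ Uᴴ) = ‖U W‖²`, the first one bounds the energy of the minimizer from below by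
`b ‖U W‖²`; the second one bounds the energy of `X* = A Vᴴ` from above by `a ‖X*‖²`.
-/

open scoped MatrixOrder ComplexOrder Matrix.Norms.Frobenius

section Energy

variable {𝕜 m n r s : Type*} [RCLike 𝕜] [Fintype m] [Fintype n] [Fintype r] [Fintype s]

/-- The Dirichlet energy `tr (U L Uᴴ)` of the rows of `U`, as a real number. It is meant for a
Hermitian `L`, for which the trace is real. -/
noncomputable def dirichletEnergy (L : Matrix n n 𝕜) (U : Matrix m n 𝕜) : ℝ :=
  RCLike.re (U * L * Uᴴ).trace

theorem dirichletEnergy_mono {L L' : Matrix n n 𝕜} (h : L ≤ L') (U : Matrix m n 𝕜) :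
    dirichletEnergy L U ≤ dirichletEnergy L' U := by
  have h_nonneg : 0 ≤ RCLike.re (U * (L' - L) * Uᴴ).trace :=
    (RCLike.nonneg_iff.mp ((Matrix.le_iff.mp h).mul_mul_conjTranspose_same U).trace_nonneg).1
  rwa [Matrix.mul_sub, Matrix.sub_mul, trace_sub, map_sub, sub_nonneg] at h_nonneg

theorem dirichletEnergy_smul (c : ℝ) (L : Matrix n n 𝕜) (U : Matrix m n 𝕜) :
    dirichletEnergy (c • L) U = c * dirichletEnergy L U := by
  simp only [dirichletEnergy, Matrix.mul_smul, Matrix.smul_mul, trace_smul, RCLike.smul_re]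

theorem dirichletEnergy_mul (L : Matrix n n 𝕜) (A : Matrix m r 𝕜) (B : Matrix r n 𝕜) :
    dirichletEnergy L (A * B) = dirichletEnergy (B * L * Bᴴ) A := by
  simp only [dirichletEnergy, conjTranspose_mul, Matrix.mul_assoc]

theorem re_trace_mul_conjTranspose_self (A : Matrix m n 𝕜) :
    RCLike.re (A * Aᴴ).trace = ‖A‖ ^ 2 := by
  rw [frobenius_norm_def, ← Real.sqrt_eq_rpow, Real.sq_sqrt (by positivity)]
  simp only [trace, diag_apply, mul_apply, conjTranspose_apply, RCLike.star_def, RCLike.mul_conj,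
    map_sum, ← RCLike.ofReal_pow, RCLike.ofReal_re, Real.rpow_two]

theorem dirichletEnergy_mul_conjTranspose_self (U : Matrix m n 𝕜) (W : Matrix n s 𝕜) :
    dirichletEnergy (W * Wᴴ) U = ‖U * W‖ ^ 2 := by
  rw [← re_trace_mul_conjTranspose_self, dirichletEnergy, conjTranspose_mul]
  simp only [Matrix.mul_assoc]

theorem mul_norm_sq_le_dirichletEnergy {L : Matrix n n 𝕜} {W : Matrix n s 𝕜} {b : ℝ}
    (hW : b • (W * Wᴴ) ≤ L) (U : Matrix m n 𝕜) :
    b * ‖U * W‖ ^ 2 ≤ dirichletEnergy L U := by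
  rw [← dirichletEnergy_mul_conjTranspose_self, ← dirichletEnergy_smul]
  exact dirichletEnergy_mono hW U

theorem dirichletEnergy_mul_conjTranspose_le {L : Matrix n n 𝕜} {V : Matrix n r 𝕜} {a : ℝ}
    (hV : Vᴴ * L * V ≤ a • (Vᴴ * V)) (A : Matrix m r 𝕜) :
    dirichletEnergy L (A * Vᴴ) ≤ a * ‖A * Vᴴ‖ ^ 2 :=
  calc dirichletEnergy L (A * Vᴴ)
      = dirichletEnergy (Vᴴ * L * V) A := by
        rw [dirichletEnergy_mul, conjTranspose_conjTranspose]
    _ ≤ dirichletEnergy (a • (Vᴴ * V)) A := dirichletEnergy_mono hV A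
    _ = a * ‖A * Vᴴ‖ ^ 2 := by
        rw [dirichletEnergy_smul, ← dirichletEnergy_mul_conjTranspose_self,
          conjTranspose_conjTranspose]

end Energy

theorem frobSq_eq_norm_sq {m n : ℕ} (A : Matrix (Fin m) (Fin n) ℝ) : frobSq A = ‖A‖ ^ 2 := by
  rw [← re_trace_mul_conjTranspose_self]
  simp [frobSq, trace, mul_apply, sq]

section Spectral

variable {𝕜 m n r : Type*} [RCLike 𝕜] [Fintype n] [DecidableEq n]

theorem submatrix_mul_conjTranspose_eq_mul_diagonal {α : Type*} [Semiring α] [StarRing α]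
    [Fintype r] (Q : Matrix m n α) (f : r ↪ n) :
    Q.submatrix id f * (Q.submatrix id f)ᴴ =
      Q * diagonal ((Set.range f).indicator 1 : n → α) * Qᴴ := by
  ext i k
  rw [mul_apply, mul_apply]
  refine Fintype.sum_of_injective f f.injective _ _ (fun j hj ↦ ?_) fun j ↦ ?_
  · rw [mul_diagonal, Set.indicator_of_notMem hj, mul_zero, zero_mul]
  · rw [mul_diagonal, Set.indicator_of_mem (Set.mem_range_self j), Pi.one_apply, mul_one]
    rfl

theorem mul_diagonal_mul_conjTranspose_mono [Finite m] (Q : Matrix m n 𝕜) {d d' : n → 𝕜}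
    (h : d ≤ d') :
    Q * diagonal d * Qᴴ ≤ Q * diagonal d' * Qᴴ := by
  have h_diag : (diagonal (d' - d)).PosSemidef := .diagonal (sub_nonneg.mpr h)
  simpa only [Matrix.le_iff, ← Matrix.sub_mul, ← Matrix.mul_sub, diagonal_sub, Pi.sub_def]
    using h_diag.mul_mul_conjTranspose_same Q

theorem smul_submatrix_mul_conjTranspose_le [Finite m] [Fintype r] (Q : Matrix m n 𝕜) {lam : n → ℝ}
    (hlam : 0 ≤ lam) (f : r ↪ n) {b : ℝ} (hb : ∀ j, b ≤ lam (f j)) :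
    b • (Q.submatrix id f * (Q.submatrix id f)ᴴ) ≤ Q * diagonal (fun i ↦ (lam i : 𝕜)) * Qᴴ := by
  rw [submatrix_mul_conjTranspose_eq_mul_diagonal, ← Matrix.smul_mul, ← Matrix.mul_smul,
    ← diagonal_smul]
  refine mul_diagonal_mul_conjTranspose_mono Q fun i ↦ ?_
  by_cases hi : i ∈ Set.range f
  · obtain ⟨j, rfl⟩ := hi
    simpa [RCLike.real_smul_eq_coe_mul] using hb j
  · simpa [hi] using hlam i

theorem conjTranspose_submatrix_mul_mul_submatrix_le [Fintype m] {Q : Matrix m n 𝕜}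
    (hQ : Qᴴ * Q = 1) (lam : n → ℝ) (f : r ↪ n) {a : ℝ} (ha : ∀ j, lam (f j) ≤ a) :
    (Q.submatrix id f)ᴴ * (Q * diagonal (fun i ↦ (lam i : 𝕜)) * Qᴴ) * Q.submatrix id f ≤
      a • ((Q.submatrix id f)ᴴ * Q.submatrix id f) := by
  classical
  have h_compress (M : Matrix m m 𝕜) :
      (Q.submatrix id f)ᴴ * M * Q.submatrix id f = (Qᴴ * M * Q).submatrix f f := rfl
  have h_gram : (Q.submatrix id f)ᴴ * Q.submatrix id f = diagonal 1 := by
    simpa [hQ, submatrix_one_embedding] using h_compress 1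
  have h_energy : (Q.submatrix id f)ᴴ * (Q * diagonal (fun i ↦ (lam i : 𝕜)) * Qᴴ) *
      Q.submatrix id f = diagonal fun j ↦ (lam (f j) : 𝕜) := by
    have h_diag : Qᴴ * (Q * diagonal (fun i ↦ (lam i : 𝕜)) * Qᴴ) * Q =
        diagonal fun i ↦ (lam i : 𝕜) := by
      rw [Matrix.mul_assoc Q, ← Matrix.mul_assoc, hQ, Matrix.one_mul, Matrix.mul_assoc, hQ,
        Matrix.mul_one]
    rw [h_compress, h_diag, submatrix_diagonal_embedding, Function.comp_def]
  rw [h_energy, h_gram, ← diagonal_smul, Matrix.le_iff, diagonal_sub]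
  refine .diagonal fun j ↦ ?_
  simpa [RCLike.real_smul_eq_coe_mul] using ha j

end Spectral

section SortedEigenvalues

variable {𝕜 α m : Type*} [RCLike 𝕜] {n k : ℕ}

/-- The first `k` columns `Q_k` of `Q`. -/
def leadingCols (Q : Matrix m (Fin n) α) (hk : k ≤ n) : Matrix m (Fin k) α :=
  Q.submatrix id (Fin.castLEEmb hk)

/-- The columns `Q̄_k` of `Q` that remain after the first `k`. -/
def trailingCols (Q : Matrix m (Fin n) α) (hk : k ≤ n) : Matrix m (Fin (n - k)) α :=
  Q.submatrix id ((Fin.natAddEmb k).trans (finCongr (Nat.add_sub_cancel' hk)).toEmbedding)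

theorem smul_trailingCols_mul_conjTranspose_le [Finite m] (Q : Matrix m (Fin n) 𝕜)
    {lam : Fin n → ℝ} (hlam_nonneg : 0 ≤ lam) (hlam_mono : Monotone lam) (hk : k < n) :
    lam ⟨k, hk⟩ • (trailingCols Q hk.le * (trailingCols Q hk.le)ᴴ) ≤
      Q * diagonal (fun i ↦ (lam i : 𝕜)) * Qᴴ :=
  smul_submatrix_mul_conjTranspose_le Q hlam_nonneg _ fun j ↦
    hlam_mono (Fin.le_def.mpr (Nat.le_add_right k j))

theorem conjTranspose_leadingCols_mul_mul_le [Fintype m] {Q : Matrix m (Fin n) 𝕜}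
    (hQ : Qᴴ * Q = 1) {lam : Fin n → ℝ} (hlam_mono : Monotone lam) (hk_pos : 1 ≤ k) (hk : k ≤ n) :
    (leadingCols Q hk)ᴴ * (Q * diagonal (fun i ↦ (lam i : 𝕜)) * Qᴴ) * leadingCols Q hk ≤
      lam ⟨k - 1, by omega⟩ • ((leadingCols Q hk)ᴴ * leadingCols Q hk) :=
  conjTranspose_submatrix_mul_mul_submatrix_le hQ lam _ fun j ↦
    hlam_mono (Fin.le_def.mpr (Nat.le_sub_one_of_lt j.isLt))

end SortedEigenvalues

section Objective

variable {𝕜 p n r₁ r₂ s₁ s₂ : Type*} [RCLike 𝕜] [Fintype p] [Fintype n] [Fintype r₁] [Fintype r₂]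
  [Fintype s₁] [Fintype s₂]

/-- The objective of FRPCAG (fast robust principal component analysis on graphs): the loss `φ` of
the residual `U - X`, plus the energies of the rows of `U` for `L₁` and of its (conjugated) columns
for `L₂`. -/
noncomputable def frpcagObjective (φ : Matrix p n 𝕜 → ℝ) (X : Matrix p n 𝕜) (γ₁ γ₂ : ℝ)
    (L₁ : Matrix n n 𝕜) (L₂ : Matrix p p 𝕜) (U : Matrix p n 𝕜) : ℝ :=
  φ (U - X) + γ₁ * dirichletEnergy L₁ U + γ₂ * dirichletEnergy L₂ Uᴴ

variable {φ : Matrix p n 𝕜 → ℝ} {L₁ : Matrix n n 𝕜} {L₂ : Matrix p p 𝕜} {a₁ a₂ b₁ b₂ γ₁ γ₂ : ℝ}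

theorem le_frpcagObjective {W₁ : Matrix n s₁ 𝕜} {W₂ : Matrix p s₂ 𝕜} (hγ₁ : 0 ≤ γ₁) (hγ₂ : 0 ≤ γ₂)
    (hW₁ : b₁ • (W₁ * W₁ᴴ) ≤ L₁) (hW₂ : b₂ • (W₂ * W₂ᴴ) ≤ L₂) (X U : Matrix p n 𝕜) :
    φ (U - X) + γ₁ * (b₁ * ‖U * W₁‖ ^ 2) + γ₂ * (b₂ * ‖W₂ᴴ * U‖ ^ 2) ≤
      frpcagObjective φ X γ₁ γ₂ L₁ L₂ U := by
  have h_cols : ‖W₂ᴴ * U‖ = ‖Uᴴ * W₂‖ := by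
    rw [← frobenius_norm_conjTranspose, conjTranspose_mul, conjTranspose_conjTranspose]
  rw [frpcagObjective, h_cols]
  gcongr
  · exact mul_norm_sq_le_dirichletEnergy hW₁ U
  · exact mul_norm_sq_le_dirichletEnergy hW₂ Uᴴ

theorem frpcagObjective_le {V₁ : Matrix n r₁ 𝕜} {V₂ : Matrix p r₂ 𝕜} (hγ₁ : 0 ≤ γ₁) (hγ₂ : 0 ≤ γ₂)
    (hV₁ : V₁ᴴ * L₁ * V₁ ≤ a₁ • (V₁ᴴ * V₁)) (hV₂ : V₂ᴴ * L₂ * V₂ ≤ a₂ • (V₂ᴴ * V₂))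
    (X : Matrix p n 𝕜) {U : Matrix p n 𝕜} {C : Matrix r₂ r₁ 𝕜} (hU : U = V₂ * C * V₁ᴴ) :
    frpcagObjective φ X γ₁ γ₂ L₁ L₂ U ≤
      φ (U - X) + γ₁ * (a₁ * ‖U‖ ^ 2) + γ₂ * (a₂ * ‖U‖ ^ 2) := by
  have h_rows : dirichletEnergy L₁ U ≤ a₁ * ‖U‖ ^ 2 := by
    rw [hU]
    exact dirichletEnergy_mul_conjTranspose_le hV₁ (V₂ * C)
  have h_cols : dirichletEnergy L₂ Uᴴ ≤ a₂ * ‖Uᴴ‖ ^ 2 := by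
    have hU_conj : Uᴴ = V₁ * Cᴴ * V₂ᴴ := by
      simp only [hU, conjTranspose_mul, conjTranspose_conjTranspose, Matrix.mul_assoc]
    rw [hU_conj]
    exact dirichletEnergy_mul_conjTranspose_le hV₂ (V₁ * Cᴴ)
  rw [frobenius_norm_conjTranspose] at h_cols
  rw [frpcagObjective]
  gcongr

theorem frpcag_bound_normalized_general {V₁ : Matrix n r₁ 𝕜} {V₂ : Matrix p r₂ 𝕜}
    {W₁ : Matrix n s₁ 𝕜} {W₂ : Matrix p s₂ 𝕜}
    (hV₁ : V₁ᴴ * L₁ * V₁ ≤ a₁ • (V₁ᴴ * V₁)) (hV₂ : V₂ᴴ * L₂ * V₂ ≤ a₂ • (V₂ᴴ * V₂))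
    (hW₁ : b₁ • (W₁ * W₁ᴴ) ≤ L₁) (hW₂ : b₂ • (W₂ * W₂ᴴ) ≤ L₂) (hb₁ : 0 < b₁) (hb₂ : 0 < b₂)
    (hφ_nonneg : ∀ A, 0 ≤ φ A) {γ : ℝ} (hγ : 0 < γ) {C : Matrix r₂ r₁ 𝕜}
    {Xstar E U : Matrix p n 𝕜} (hXstar : Xstar = V₂ * C * V₁ᴴ)
    (hU : frpcagObjective φ (Xstar + E) (γ / b₁) (γ / b₂) L₁ L₂ U ≤
      frpcagObjective φ (Xstar + E) (γ / b₁) (γ / b₂) L₁ L₂ Xstar) :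
    ‖U * W₁‖ ^ 2 + ‖W₂ᴴ * U‖ ^ 2 ≤ (1 / γ) * φ (-E) + ‖Xstar‖ ^ 2 * (a₁ / b₁ + a₂ / b₂) := by
  have hγ₁ : 0 ≤ γ / b₁ := by positivity
  have hγ₂ : 0 ≤ γ / b₂ := by positivity
  have h_chain := (le_frpcagObjective hγ₁ hγ₂ hW₁ hW₂ (Xstar + E) U).trans
    (hU.trans (frpcagObjective_le hγ₁ hγ₂ hV₁ hV₂ (Xstar + E) hXstar))
  rw [sub_add_cancel_left] at h_chain
  refine le_of_mul_le_mul_left ?_ hγ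
  calc γ * (‖U * W₁‖ ^ 2 + ‖W₂ᴴ * U‖ ^ 2)
      = γ / b₁ * (b₁ * ‖U * W₁‖ ^ 2) + γ / b₂ * (b₂ * ‖W₂ᴴ * U‖ ^ 2) := by field_simp
    _ ≤ φ (-E) + γ / b₁ * (a₁ * ‖Xstar‖ ^ 2) + γ / b₂ * (a₂ * ‖Xstar‖ ^ 2) := by
        linarith [hφ_nonneg (U - (Xstar + E))]
    _ = γ * ((1 / γ) * φ (-E) + ‖Xstar‖ ^ 2 * (a₁ / b₁ + a₂ / b₂)) := by
        field_simp
        ring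

end Objective

theorem frpcag_bound_normalized {p n k₁ k₂ : ℕ}
    (hk₁1 : 1 ≤ k₁) (hk₁n : k₁ < n) (hk₂1 : 1 ≤ k₂) (hk₂p : k₂ < p)
    -- eigendecomposition of the sample graph Laplacian L₁ = Q Λ Qᵀ
    (L₁ : Matrix (Fin n) (Fin n) ℝ) (Q : Matrix (Fin n) (Fin n) ℝ) (lam : Fin n → ℝ)
    (hQ₁ : Qᵀ * Q = 1) (hQ₂ : Q * Qᵀ = 1)
    (hlam_nonneg : ∀ i, 0 ≤ lam i) (hlam_mono : Monotone lam)
    (hL₁ : L₁ = Q * Matrix.diagonal lam * Qᵀ)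
    -- eigendecomposition of the feature graph Laplacian L₂ = P Ω Pᵀ
    (L₂ : Matrix (Fin p) (Fin p) ℝ) (P : Matrix (Fin p) (Fin p) ℝ) (om : Fin p → ℝ)
    (hP₁ : Pᵀ * P = 1) (hP₂ : P * Pᵀ = 1)
    (hom_nonneg : ∀ i, 0 ≤ om i) (hom_mono : Monotone om)
    (hL₂ : L₂ = P * Matrix.diagonal om * Pᵀ)
    -- the (k₁,k₂)-low-rank matrix X* = P_{k₂} C Q_{k₁}ᵀ, the noise E and the data X
    (C : Matrix (Fin k₂) (Fin k₁) ℝ)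
    (Xstar : Matrix (Fin p) (Fin n) ℝ)
    (hXstar : Xstar = (Matrix.of fun (i : Fin p) (j : Fin k₂) => P i ⟨j, by omega⟩) * C *
      (Matrix.of fun (i : Fin n) (j : Fin k₁) => Q i ⟨j, by omega⟩)ᵀ)
    (E X : Matrix (Fin p) (Fin n) ℝ) (hX : X = Xstar + E)
    -- the loss function φ
    (φ : Matrix (Fin p) (Fin n) ℝ → ℝ)
    (hφ_nonneg : ∀ A, 0 ≤ φ A) (hφ_convex : ConvexOn ℝ Set.univ φ)
    (hφ_even : ∀ A, φ (-A) = φ A)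
    -- the regularization parameters
    (γ γ₁ γ₂ : ℝ) (hγ : 0 < γ)
    (hlam_pos : 0 < lam ⟨k₁, hk₁n⟩) (hom_pos : 0 < om ⟨k₂, hk₂p⟩)
    (hγ₁ : γ₁ = γ / lam ⟨k₁, hk₁n⟩) (hγ₂ : γ₂ = γ / om ⟨k₂, hk₂p⟩)
    -- U* is a global minimizer of the FRPCAG objective
    (Ustar : Matrix (Fin p) (Fin n) ℝ)
    (hUstar : ∀ U : Matrix (Fin p) (Fin n) ℝ,
      φ (Ustar - X) + γ₁ * Matrix.trace (Ustar * L₁ * Ustarᵀ) +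
          γ₂ * Matrix.trace (Ustarᵀ * L₂ * Ustar) ≤
        φ (U - X) + γ₁ * Matrix.trace (U * L₁ * Uᵀ) +
          γ₂ * Matrix.trace (Uᵀ * L₂ * U)) :
    frobSq (Ustar * Matrix.of fun (i : Fin n) (j : Fin (n - k₁)) => Q i ⟨k₁ + j, by omega⟩) +
      frobSq ((Matrix.of fun (i : Fin p) (j : Fin (p - k₂)) => P i ⟨k₂ + j, by omega⟩)ᵀ * Ustar)
    ≤ (1 / γ) * φ E + frobSq Xstar *
        (lam ⟨k₁ - 1, by omega⟩ / lam ⟨k₁, hk₁n⟩ +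
          om ⟨k₂ - 1, by omega⟩ / om ⟨k₂, hk₂p⟩) := by
  subst hL₁ hL₂ hX hγ₁ hγ₂
  simp only [frobSq_eq_norm_sq, ← hφ_even E]
  -- Over `ℝ`, `ᴴ` unfolds to `ᵀ`, and `RCLike.re` and the coercion from `ℝ` to the identity, so
  -- the two sides match definitionally.
  exact frpcag_bound_normalized_general
    (conjTranspose_leadingCols_mul_mul_le hQ₁ hlam_mono hk₁1 hk₁n.le)
    (conjTranspose_leadingCols_mul_mul_le hP₁ hom_mono hk₂1 hk₂p.le)
    (smul_trailingCols_mul_conjTranspose_le Q hlam_nonneg hlam_mono hk₁n)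
    (smul_trailingCols_mul_conjTranspose_le P hom_nonneg hom_mono hk₂p)
    hlam_pos hom_pos hφ_nonneg hγ hXstar (hUstar Xstar)
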